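/- arXiv:1610.06834 — 5 statements merged into one kernel-verified Lean document; each statement's English description precedes it below -/
import Mathlib

section
/- (Lemma 4.2(i): zero projected-gradient step characterizes KKT points.) Let z ∈ ℝⁿ, let α > 0, let a ∈ ℝⁿ (playing the role of ∇J(z)), let b₁,…,b_m ∈ ℝⁿ and scalars g₁,…,g_m ∈ ℝ (playing ∇g_j(z) and g_j(z)), and let c₁,…,c_p ∈ ℝⁿ and scalars h₁,…,h_p ∈ ℝ (playing ∇h_i(z) and h_i(z)). Define the polyhedron C := {d ∈ ℝⁿ : g_j + ⟨b_j, d⟩ ≤ 0 for all j = 1,…,m and h_i + ⟨c_i, d⟩ = 0 for all i = 1,…,p}, and assume C is nonempty. Then the following are equivalent: (1) 0 ∈ C and ‖α a‖ ≤ ‖d + α a‖ for all d ∈ C (i.e., 0 is the Euclidean projection of −α a onto C); (2) g_j ≤ 0 for all j, h_i = 0 for all i, and there exist λ ∈ ℝᵐ with λ ≥ 0 and ν ∈ ℝᵖ such that a + Σ_{j=1}^m λ_j b_j + Σ_{i=1}^p ν_i c_i = 0 and λ_j g_j = 0 for every j. -/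
open scoped RealInnerProductSpace

/-- Farkas lemma for finitely many linear functionals. -/
theorem farkas_aux {ι V : Type*} [DecidableEq ι] [AddCommGroup V] [Module ℝ V] (s : Finset ι) :
    ∀ (f : ι → V →ₗ[ℝ] ℝ) (A : V →ₗ[ℝ] ℝ),
      (∀ x, (∀ i ∈ s, f i x ≤ 0) → A x ≤ 0) →
      ∃ l : ι → ℝ, (∀ i, 0 ≤ l i) ∧ ∀ x, A x = ∑ i ∈ s, l i * f i x := by
  induction s using Finset.induction_on with
  | empty =>
    intro f A H
    refine ⟨fun _ => 0, fun _ => le_rfl, fun x => ?_⟩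
    have h1 := H x (by simp)
    have h2 := H (-x) (by simp)
    rw [map_neg] at h2
    simp only [Finset.sum_empty]
    linarith
  | insert k s hk ih =>
    intro f A H
    by_cases hA : ∀ x, (∀ i ∈ s, f i x ≤ 0) → A x ≤ 0
    · obtain ⟨l, hl, hs⟩ := ih f A hA
      refine ⟨fun i => if i = k then 0 else l i, fun i => ?_, fun x => ?_⟩
      · dsimp only
        split_ifs
        · exact le_rfl
        · exact hl i
      · rw [Finset.sum_insert hk, hs x]
        simp only [if_true, zero_mul, zero_add]
        refine Finset.sum_congr rfl fun i hi => ?_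
        have hik : i ≠ k := fun e => hk (e ▸ hi)
        rw [if_neg hik]
    · push Not at hA
      obtain ⟨y, hy, hAy⟩ := hA
      have hfy : 0 < f k y := by
        by_contra hc
        push Not at hc
        have := H y (by
          intro i hi
          rcases Finset.mem_insert.1 hi with rfl | hi
          · exact hc
          · exact hy i hi)
        linarith
      let P : V →ₗ[ℝ] V := LinearMap.id - (f k).smulRight ((f k y)⁻¹ • y)
      have hP : ∀ (φ : V →ₗ[ℝ] ℝ) x, (φ ∘ₗ P) x = φ x - f k x * ((f k y)⁻¹ * φ y) := by
        intro φ x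
        simp [P]
      obtain ⟨l, hl, hs⟩ := ih (fun i => f i ∘ₗ P) (A ∘ₗ P) (by
        intro x hx
        refine H (P x) ?_
        intro i hi
        rcases Finset.mem_insert.1 hi with rfl | hi
        · have := hP (f i) x
          rw [inv_mul_cancel₀ hfy.ne'] at this
          simp only [LinearMap.comp_apply] at this
          linarith
        · exact hx i hi)
      refine ⟨fun i => if i = k then (f k y)⁻¹ * (A y - ∑ i ∈ s, l i * f i y) else l i,
        fun i => ?_, fun x => ?_⟩
      · dsimp only
        split_ifs
        · refine mul_nonneg (inv_nonneg.2 hfy.le) ?_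
          have : ∑ i ∈ s, l i * f i y ≤ 0 :=
            Finset.sum_nonpos fun i hi => mul_nonpos_of_nonneg_of_nonpos (hl i) (hy i hi)
          linarith
        · exact hl i
      · rw [Finset.sum_insert hk]
        have h1 := hs x
        simp only [hP] at h1
        have h2 : ∑ i ∈ s, (if i = k then (f k y)⁻¹ * (A y - ∑ i ∈ s, l i * f i y) else l i) * f i x
            = ∑ i ∈ s, l i * f i x := by
          refine Finset.sum_congr rfl fun i hi => ?_
          have hik : i ≠ k := fun e => hk (e ▸ hi)
          rw [if_neg hik]
        rw [h2]
        dsimp only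
        rw [if_pos rfl]
        have h3 : ∑ i ∈ s, l i * (f i x - f k x * ((f k y)⁻¹ * f i y))
            = ∑ i ∈ s, l i * f i x - f k x * (f k y)⁻¹ * ∑ i ∈ s, l i * f i y := by
          rw [Finset.mul_sum, ← Finset.sum_sub_distrib]
          exact Finset.sum_congr rfl fun i _ => by ring
        rw [h3] at h1
        linear_combination h1

/-- Lemma 4.2(i): the zero projected-gradient step characterizes KKT points.
`0` is the Euclidean projection of `-α • a` onto the linearized constraint set `C`
iff the linearized constraints are satisfied at `0` (i.e. `g ≤ 0`, `h = 0`) and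
there are multipliers `λ ≥ 0`, `ν` with stationarity and complementarity. -/
theorem stmt_0 {n m p : ℕ} (α : ℝ) (hα : 0 < α)
    (a : EuclideanSpace ℝ (Fin n))
    (b : Fin m → EuclideanSpace ℝ (Fin n)) (g : Fin m → ℝ)
    (c : Fin p → EuclideanSpace ℝ (Fin n)) (h : Fin p → ℝ)
    (C : Set (EuclideanSpace ℝ (Fin n)))
    (hC : C = {d | (∀ j, g j + ⟪b j, d⟫ ≤ 0) ∧ (∀ i, h i + ⟪c i, d⟫ = 0)})
    (hne : C.Nonempty) :
    ((0 : EuclideanSpace ℝ (Fin n)) ∈ C ∧ ∀ d ∈ C, ‖α • a‖ ≤ ‖d + α • a‖) ↔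
      ((∀ j, g j ≤ 0) ∧ (∀ i, h i = 0) ∧
        ∃ (lam : Fin m → ℝ) (nu : Fin p → ℝ),
          (∀ j, 0 ≤ lam j) ∧
          a + (∑ j, lam j • b j) + (∑ i, nu i • c i) = 0 ∧
          (∀ j, lam j * g j = 0)) := by
  have hnorm : ∀ d : EuclideanSpace ℝ (Fin n),
      ‖d + α • a‖ ^ 2 = ‖d‖ ^ 2 + 2 * (α * ⟪a, d⟫) + ‖α • a‖ ^ 2 := by
    intro d
    rw [norm_add_sq_real, inner_smul_right, real_inner_comm]
  subst hC
  constructor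
  · rintro ⟨h0, hmin⟩
    have hg : ∀ j, g j ≤ 0 := fun j => by simpa using h0.1 j
    have hh : ∀ i, h i = 0 := fun i => by simpa using h0.2 i
    refine ⟨hg, hh, ?_⟩
    let f : Fin m ⊕ (Fin p ⊕ Fin p) → EuclideanSpace ℝ (Fin n) →ₗ[ℝ] ℝ :=
      Sum.elim (fun j => if g j = 0 then innerₗ _ (b j) else 0)
        (Sum.elim (fun i => innerₗ _ (c i)) (fun i => - innerₗ _ (c i)))
    obtain ⟨l, hl, hs⟩ := farkas_aux Finset.univ f (-innerₗ _ a) (by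
      intro d hd
      have hb : ∀ j, g j = 0 → ⟪b j, d⟫ ≤ 0 := fun j hj => by
        simpa [f, hj] using hd (Sum.inl j) (Finset.mem_univ _)
      have hc : ∀ i, ⟪c i, d⟫ = 0 := fun i => by
        have h1 := hd (Sum.inr (Sum.inl i)) (Finset.mem_univ _)
        have h2 := hd (Sum.inr (Sum.inr i)) (Finset.mem_univ _)
        simp [f] at h1 h2
        linarith
      have key : ∀ᶠ t : ℝ in nhdsWithin 0 (Set.Ioi 0), ∀ j, g j + t * ⟪b j, d⟫ ≤ 0 := by
        rw [Filter.eventually_all]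
        intro j
        by_cases hj : g j = 0
        · filter_upwards [self_mem_nhdsWithin] with t ht
          rw [hj, zero_add]
          exact mul_nonpos_of_nonneg_of_nonpos (le_of_lt ht) (hb j hj)
        · have hlt : g j < 0 := lt_of_le_of_ne (hg j) hj
          have hcont : Continuous fun t : ℝ => g j + t * ⟪b j, d⟫ := by fun_prop
          have := hcont.continuousAt.eventually_lt (x₀ := (0 : ℝ)) (g := fun _ => (0 : ℝ))
            continuousAt_const (by simpa using hlt)
          exact (this.filter_mono nhdsWithin_le_nhds).mono fun t ht => ht.le
      have key2 : ∀ᶠ t : ℝ in nhdsWithin 0 (Set.Ioi 0),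
          0 ≤ t * ‖d‖ ^ 2 + 2 * (α * ⟪a, d⟫) := by
        filter_upwards [key, self_mem_nhdsWithin] with t ht htpos
        have htpos : 0 < t := htpos
        have h1 := hmin (t • d) ⟨fun j => by rw [inner_smul_right]; exact ht j,
          fun i => by rw [inner_smul_right, hc i, hh i]; simp⟩
        have h2 := pow_le_pow_left₀ (norm_nonneg _) h1 2
        rw [hnorm, inner_smul_right, norm_smul t d, mul_pow, Real.norm_eq_abs, sq_abs] at h2
        refine nonneg_of_mul_nonneg_right (a := t) ?_ htpos
        nlinarith
      have hlim : Filter.Tendsto (fun t : ℝ => t * ‖d‖ ^ 2 + 2 * (α * ⟪a, d⟫))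
          (nhdsWithin 0 (Set.Ioi 0)) (nhds (0 * ‖d‖ ^ 2 + 2 * (α * ⟪a, d⟫))) := by
        have hcont : Continuous fun t : ℝ => t * ‖d‖ ^ 2 + 2 * (α * ⟪a, d⟫) := by fun_prop
        exact (hcont.tendsto 0).mono_left nhdsWithin_le_nhds
      have h3 := ge_of_tendsto hlim key2
      have h4 : 0 ≤ ⟪a, d⟫ := by
        refine nonneg_of_mul_nonneg_right (a := α) ?_ hα
        linarith
      simpa using h4)
    refine ⟨fun j => if g j = 0 then l (Sum.inl j) else 0,
      fun i => l (Sum.inr (Sum.inl i)) - l (Sum.inr (Sum.inr i)), fun j => ?_, ?_, fun j => ?_⟩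
    · dsimp only
      split_ifs
      · exact hl _
      · exact le_rfl
    · refine ext_inner_right ℝ fun d => ?_
      have h1 := hs d
      simp only [Fintype.sum_sum_type, f, Sum.elim_inl, Sum.elim_inr, LinearMap.neg_apply,
        innerₗ_apply_apply] at h1
      have h2 : ∀ j, l (Sum.inl j) * ((if g j = 0 then innerₗ _ (b j) else 0 :
          EuclideanSpace ℝ (Fin n) →ₗ[ℝ] ℝ) d)
          = (if g j = 0 then l (Sum.inl j) else 0) * ⟪b j, d⟫ := by
        intro j
        split_ifs <;> simp
      simp only [h2, mul_neg, Finset.sum_neg_distrib] at h1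
      simp only [inner_add_left, sum_inner, inner_smul_left, inner_zero_left, sub_mul,
        Finset.sum_sub_distrib, map_sub, conj_trivial]
      linarith
    · dsimp only
      split_ifs with hj
      · rw [hj, mul_zero]
      · rw [zero_mul]
  · rintro ⟨hg, hh, lam, nu, hlam, hstat, hcomp⟩
    refine ⟨⟨fun j => by simpa using hg j, fun i => by simpa using hh i⟩, ?_⟩
    rintro d ⟨hd1, hd2⟩
    have h1 : ⟪a + (∑ j, lam j • b j) + (∑ i, nu i • c i), d⟫ = 0 := by
      rw [hstat, inner_zero_left]
    simp only [inner_add_left, sum_inner, inner_smul_left, conj_trivial] at h1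
    have h2 : ∑ i, nu i * ⟪c i, d⟫ = 0 := Finset.sum_eq_zero fun i _ => by
      have := hd2 i
      rw [hh i, zero_add] at this
      rw [this, mul_zero]
    have h3 : ∑ j, lam j * ⟪b j, d⟫ ≤ 0 := Finset.sum_nonpos fun j _ => by
      have := mul_nonpos_of_nonneg_of_nonpos (hlam j) (hd1 j)
      rw [mul_add, hcomp j, zero_add] at this
      exact this
    have h4 : 0 ≤ α * ⟪a, d⟫ := mul_nonneg hα.le (by linarith)
    refine (sq_le_sq₀ (norm_nonneg _) (norm_nonneg _)).1 ?_
    rw [hnorm]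
    nlinarith [sq_nonneg ‖d‖]
end

section
/- (Derivative of the merit function, key computation in Lemma 4.4.) Let J : ℝⁿ → ℝ, g : ℝⁿ → ℝᵐ, h : ℝⁿ → ℝᵖ be differentiable at z ∈ ℝⁿ with gradients ∇J(z), ∇g_j(z), ∇h_i(z). Let ρ ≥ 0, d_z ∈ ℝⁿ, s, d_s, λ, d_λ ∈ ℝᵐ, ν, d_ν ∈ ℝᵖ, and assume the linearized feasibility relations ⟨∇g_j(z), d_z⟩ + d_{s,j} = −(g_j(z) + s_j) for all j and ⟨∇h_i(z), d_z⟩ = −h_i(z) for all i. Define φ(t) := L_aug^ρ(z + t d_z, λ + t d_λ, ν + t d_ν, s + t d_s). Then φ is differentiable at t = 0 and φ'(0) = ⟨∇J(z), d_z⟩ − ⟨g(z) + s, λ − d_λ⟩ − ρ‖g(z) + s‖² − ⟨h(z), ν − d_ν⟩ − ρ‖h(z)‖². -/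
open scoped RealInnerProductSpace

theorem line_aux {n : ℕ} {f : EuclideanSpace ℝ (Fin n) → ℝ} {a z : EuclideanSpace ℝ (Fin n)}
    (hf : HasGradientAt f a z) (d : EuclideanSpace ℝ (Fin n)) :
    HasDerivAt (fun t : ℝ => f (z + t • d)) ⟪a, d⟫ 0 := by
  have h1 : HasDerivAt (fun t : ℝ => z + t • d) d 0 := by
    simpa using ((hasDerivAt_id (0 : ℝ)).smul_const d).const_add z
  have h2 : HasFDerivAt f (InnerProductSpace.toDual ℝ _ a) (z + (0 : ℝ) • d) := by
    simpa using hf.hasFDerivAt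
  have h3 := h2.comp_hasDerivAt (0 : ℝ) h1
  rw [InnerProductSpace.toDual_apply_apply] at h3
  exact h3

theorem euclid_aux {m : ℕ} {F : ℝ → EuclideanSpace ℝ (Fin m)} {F' : EuclideanSpace ℝ (Fin m)}
    (hF : ∀ j, HasDerivAt (fun t => F t j) (F' j) 0) : HasDerivAt F F' 0 := by
  have h1 : HasDerivAt (fun t => (F t).ofLp) F'.ofLp 0 := hasDerivAt_pi.2 hF
  exact ((PiLp.continuousLinearEquiv 2 ℝ (fun _ : Fin m => ℝ)).symm.toContinuousLinearMap.hasFDerivAt).comp_hasDerivAt (0 : ℝ) h1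

/-- Derivative of the merit function (key computation in Lemma 4.4).
With the augmented Lagrangian
`L_aug^ρ(z,λ,ν,s) = J(z) + ⟪g(z)+s, λ⟫ + ⟪h(z), ν⟫ + (ρ/2)‖g(z)+s‖² + (ρ/2)‖h(z)‖²`
and `φ(t) = L_aug^ρ` along the direction `(d_z, d_λ, d_ν, d_s)`, under the linearized
feasibility relations the function `φ` has derivative at `0` equal to
`⟪∇J(z), d_z⟫ − ⟪g(z)+s, λ−d_λ⟫ − ρ‖g(z)+s‖² − ⟪h(z), ν−d_ν⟫ − ρ‖h(z)‖²`. -/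
theorem stmt_2 {n m p : ℕ}
    (J : EuclideanSpace ℝ (Fin n) → ℝ)
    (g : EuclideanSpace ℝ (Fin n) → EuclideanSpace ℝ (Fin m))
    (h : EuclideanSpace ℝ (Fin n) → EuclideanSpace ℝ (Fin p))
    (z : EuclideanSpace ℝ (Fin n))
    (aJ : EuclideanSpace ℝ (Fin n)) (hJ : HasGradientAt J aJ z)
    (bg : Fin m → EuclideanSpace ℝ (Fin n))
    (hg : ∀ j, HasGradientAt (fun w => g w j) (bg j) z)
    (ch : Fin p → EuclideanSpace ℝ (Fin n))
    (hh : ∀ i, HasGradientAt (fun w => h w i) (ch i) z)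
    (ρ : ℝ) (hρ : 0 ≤ ρ)
    (dz : EuclideanSpace ℝ (Fin n))
    (s ds lam dlam : EuclideanSpace ℝ (Fin m))
    (nu dnu : EuclideanSpace ℝ (Fin p))
    (hlin_g : ∀ j, ⟪bg j, dz⟫ + ds j = -(g z j + s j))
    (hlin_h : ∀ i, ⟪ch i, dz⟫ = -(h z i)) :
    HasDerivAt
      (fun t : ℝ =>
        J (z + t • dz) + ⟪g (z + t • dz) + (s + t • ds), lam + t • dlam⟫ +
          ⟪h (z + t • dz), nu + t • dnu⟫ +
          (ρ / 2) * ‖g (z + t • dz) + (s + t • ds)‖ ^ 2 +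
          (ρ / 2) * ‖h (z + t • dz)‖ ^ 2)
      (⟪aJ, dz⟫ - ⟪g z + s, lam - dlam⟫ - ρ * ‖g z + s‖ ^ 2 -
        ⟪h z, nu - dnu⟫ - ρ * ‖h z‖ ^ 2)
      0 := by
  have hid (k : ℕ) (a d : EuclideanSpace ℝ (Fin k)) :
      HasDerivAt (fun t : ℝ => a + t • d) d 0 := by
    simpa using ((hasDerivAt_id (0 : ℝ)).smul_const d).const_add a
  have hG : HasDerivAt (fun t : ℝ => g (z + t • dz) + (s + t • ds)) (-(g z + s)) 0 := by
    apply euclid_aux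
    intro j
    have h1 := line_aux (hg j) dz
    have h2 : HasDerivAt (fun t : ℝ => s j + t * ds j) (ds j) 0 := by
      simpa using ((hasDerivAt_id (0 : ℝ)).mul_const (ds j)).const_add (s j)
    have h3 := h1.add h2
    rw [hlin_g j] at h3
    exact h3
  have hH : HasDerivAt (fun t : ℝ => h (z + t • dz)) (-(h z)) 0 := by
    apply euclid_aux
    intro i
    have h1 := line_aux (hh i) dz
    rw [hlin_h i] at h1
    exact h1
  have key := ((((line_aux hJ dz).add (hG.inner ℝ (hid m lam dlam))).add
    (hH.inner ℝ (hid p nu dnu))).add (hG.norm_sq.const_mul (ρ / 2))).add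
    (hH.norm_sq.const_mul (ρ / 2))
  refine key.congr_deriv ?_
  simp only [zero_smul, add_zero, inner_neg_left, inner_neg_right, inner_sub_right,
    real_inner_self_eq_norm_sq]
  ring
end

section
/- (Lemma 4.4: tuning of the penalty parameter.) Let J : ℝⁿ → ℝ, g : ℝⁿ → ℝᵐ, h : ℝⁿ → ℝᵖ be differentiable at z ∈ ℝⁿ with gradients ∇J(z), ∇g_j(z), ∇h_i(z), and let α > 0. Let d_z ∈ ℝⁿ, s, d_s, λ, λ_G ∈ ℝᵐ, ν, ν_G ∈ ℝᵖ, with s ≥ 0 and λ_G ≥ 0, and set d_λ := λ_G − λ, d_ν := ν_G − ν. Assume: (a) (1/α) d_z + ∇J(z) + Σ_{j=1}^m λ_{G,j} ∇g_j(z) + Σ_{i=1}^p ν_{G,i} ∇h_i(z) = 0; (b) λ_{G,j}(g_j(z) + ⟨∇g_j(z), d_z⟩) = 0 for all j; (c) ⟨∇g_j(z), d_z⟩ + d_{s,j} = −(g_j(z) + s_j) for all j; (d) ⟨∇h_i(z), d_z⟩ = −h_i(z) for all i. For each ρ ≥ 0 define φ_ρ(t) := L_aug^ρ(z + t d_z,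 λ + t d_λ, ν + t d_ν, s + t d_s). Then there exists ρ̂ ≥ 0 such that for every ρ ≥ ρ̂, φ_ρ is differentiable at 0 and φ_ρ'(0) ≤ −(1/(2α))‖d_z‖². -/
open scoped RealInnerProductSpace

theorem hasDerivAt_eucl {k : ℕ} (f : ℝ → EuclideanSpace ℝ (Fin k))
    (f' : EuclideanSpace ℝ (Fin k)) (x : ℝ) :
    HasDerivAt f f' x ↔ ∀ i, HasDerivAt (fun t => f t i) (f' i) x := by
  rw [hasDerivAt_iff_hasFDerivAt, ← hasFDerivWithinAt_univ, hasFDerivWithinAt_euclidean]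
  refine forall_congr' fun i => ?_
  rw [hasDerivAt_iff_hasFDerivAt, hasFDerivWithinAt_univ]
  have : (PiLp.proj 2 (fun _ : Fin k => ℝ) i : EuclideanSpace ℝ (Fin k) →L[ℝ] ℝ) ∘L
      (ContinuousLinearMap.toSpanSingleton ℝ f') =
      ContinuousLinearMap.toSpanSingleton ℝ (f' i) := by
    ext
    simp
  rw [this]

/-- Lemma 4.4: tuning of the penalty parameter.  Under the KKT conditions of the
projection subproblem (a)–(b) and the slack relations (c)–(d), there exists `ρ̂ ≥ 0`
such that for every penalty `ρ ≥ ρ̂` the merit function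
`φ_ρ(t) = L_aug^ρ(z + t d_z, λ + t d_λ, ν + t d_ν, s + t d_s)` is differentiable at `0`
with `φ_ρ'(0) ≤ −‖d_z‖²/(2α)`. -/
theorem stmt_3 {n m p : ℕ}
    (J : EuclideanSpace ℝ (Fin n) → ℝ)
    (g : EuclideanSpace ℝ (Fin n) → EuclideanSpace ℝ (Fin m))
    (h : EuclideanSpace ℝ (Fin n) → EuclideanSpace ℝ (Fin p))
    (z : EuclideanSpace ℝ (Fin n))
    (aJ : EuclideanSpace ℝ (Fin n)) (hJ : HasGradientAt J aJ z)
    (bg : Fin m → EuclideanSpace ℝ (Fin n))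
    (hg : ∀ j, HasGradientAt (fun w => g w j) (bg j) z)
    (ch : Fin p → EuclideanSpace ℝ (Fin n))
    (hh : ∀ i, HasGradientAt (fun w => h w i) (ch i) z)
    (α : ℝ) (hα : 0 < α)
    (dz : EuclideanSpace ℝ (Fin n))
    (s ds lam lamG : EuclideanSpace ℝ (Fin m))
    (nu nuG : EuclideanSpace ℝ (Fin p))
    (hs : ∀ j, 0 ≤ s j) (hlamG : ∀ j, 0 ≤ lamG j)
    (dlam : EuclideanSpace ℝ (Fin m)) (hdlam : dlam = lamG - lam)
    (dnu : EuclideanSpace ℝ (Fin p)) (hdnu : dnu = nuG - nu)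
    -- (a) stationarity of the projection subproblem
    (ha : (1 / α) • dz + aJ + (∑ j, lamG j • bg j) + (∑ i, nuG i • ch i) = 0)
    -- (b) complementarity for the linearized inequality constraints
    (hb : ∀ j, lamG j * (g z j + ⟪bg j, dz⟫) = 0)
    -- (c) slack direction relation
    (hc : ∀ j, ⟪bg j, dz⟫ + ds j = -(g z j + s j))
    -- (d) linearized equality constraints
    (hd : ∀ i, ⟪ch i, dz⟫ = -(h z i)) :
    ∃ ρhat : ℝ, 0 ≤ ρhat ∧ ∀ ρ : ℝ, ρhat ≤ ρ →
      DifferentiableAt ℝ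
        (fun t : ℝ =>
          J (z + t • dz) + ⟪g (z + t • dz) + (s + t • ds), lam + t • dlam⟫ +
            ⟪h (z + t • dz), nu + t • dnu⟫ +
            (ρ / 2) * ‖g (z + t • dz) + (s + t • ds)‖ ^ 2 +
            (ρ / 2) * ‖h (z + t • dz)‖ ^ 2) 0 ∧
      deriv
        (fun t : ℝ =>
          J (z + t • dz) + ⟪g (z + t • dz) + (s + t • ds), lam + t • dlam⟫ +
            ⟪h (z + t • dz), nu + t • dnu⟫ +
            (ρ / 2) * ‖g (z + t • dz) + (s + t • ds)‖ ^ 2 +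
            (ρ / 2) * ‖h (z + t • dz)‖ ^ 2) 0 ≤ -(1 / (2 * α)) * ‖dz‖ ^ 2 := by
  have hline : HasDerivAt (fun t : ℝ => z + t • dz) dz 0 := by
    simpa using ((hasDerivAt_id (0 : ℝ)).smul_const dz).const_add z
  have key : ∀ (f : EuclideanSpace ℝ (Fin n) → ℝ) (a : EuclideanSpace ℝ (Fin n)),
      HasGradientAt f a z → HasDerivAt (fun t : ℝ => f (z + t • dz)) ⟪a, dz⟫ 0 := by
    intro f a hf
    have h1 : HasFDerivAt f (InnerProductSpace.toDual ℝ _ a) (z + (0 : ℝ) • dz) := by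
      simpa using hf.hasFDerivAt
    have h2 := h1.comp_hasDerivAt (0 : ℝ) hline
    simpa [Function.comp_def] using h2
  have hR : HasDerivAt (fun t : ℝ => g (z + t • dz) + (s + t • ds)) (-(g z + s)) 0 := by
    rw [hasDerivAt_eucl]
    intro j
    have h1 := key _ _ (hg j)
    have h2 : HasDerivAt (fun t : ℝ => s j + t * ds j) (ds j) 0 := by
      simpa using ((hasDerivAt_id (0 : ℝ)).mul_const (ds j)).const_add (s j)
    have h3 := h1.add h2
    rw [hc j] at h3
    exact h3
  have hH : HasDerivAt (fun t : ℝ => h (z + t • dz)) (-(h z)) 0 := by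
    rw [hasDerivAt_eucl]
    intro i
    have h1 := key _ _ (hh i)
    rw [hd i] at h1
    simpa using h1
  have hL : HasDerivAt (fun t : ℝ => lam + t • dlam) dlam 0 := by
    simpa using ((hasDerivAt_id (0 : ℝ)).smul_const dlam).const_add lam
  have hN : HasDerivAt (fun t : ℝ => nu + t • dnu) dnu 0 := by
    simpa using ((hasDerivAt_id (0 : ℝ)).smul_const dnu).const_add nu
  have hder : ∀ ρ : ℝ, HasDerivAt (fun t : ℝ =>
          J (z + t • dz) + ⟪g (z + t • dz) + (s + t • ds), lam + t • dlam⟫ +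
            ⟪h (z + t • dz), nu + t • dnu⟫ +
            (ρ / 2) * ‖g (z + t • dz) + (s + t • ds)‖ ^ 2 +
            (ρ / 2) * ‖h (z + t • dz)‖ ^ 2)
      (⟪aJ, dz⟫ + (⟪g z + s, dlam⟫ - ⟪g z + s, lam⟫) + (⟪h z, dnu⟫ - ⟪h z, nu⟫)
        - ρ * (‖g z + s‖ ^ 2 + ‖h z‖ ^ 2)) 0 := by
    intro ρ
    have := ((((key _ _ hJ).add (hR.inner ℝ hL)).add (hH.inner ℝ hN)).add
      (hR.norm_sq.const_mul (ρ / 2))).add (hH.norm_sq.const_mul (ρ / 2))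
    refine this.congr_deriv ?_
    simp only [zero_smul, add_zero, inner_neg_left, inner_neg_right,
      real_inner_self_eq_norm_sq]
    ring
  have hJ1 : ⟪aJ, dz⟫ = -(1 / α) * ‖dz‖ ^ 2 + ∑ j, lamG j * g z j + ⟪h z, nuG⟫ := by
    have h1 := congrArg (fun v => ⟪v, dz⟫) ha
    simp only [inner_add_left, sum_inner, real_inner_smul_left, inner_zero_left,
      real_inner_self_eq_norm_sq, hd] at h1
    have h2 : ∑ j, lamG j * ⟪bg j, dz⟫ = - ∑ j, lamG j * g z j := by
      rw [← Finset.sum_neg_distrib]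
      exact Finset.sum_congr rfl fun j _ => by linarith [hb j]
    have h3 : ⟪h z, nuG⟫ = - ∑ i, nuG i * -(h z i) := by
      simp [PiLp.inner_apply]
    rw [h2] at h1
    rw [h3]
    linarith
  have hle : ∑ j, lamG j * g z j ≤ ⟪g z + s, lamG⟫ := by
    simp only [PiLp.inner_apply]
    refine Finset.sum_le_sum fun j _ => ?_
    have := mul_nonneg (hlamG j) (hs j)
    simp
    linarith
  set S : ℝ := ‖g z + s‖ ^ 2 + ‖h z‖ ^ 2 with hS
  set C : ℝ := 2 * ⟪g z + s, dlam⟫ + 2 * ⟪h z, dnu⟫ with hC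
  have hS0 : 0 ≤ S := by positivity
  refine ⟨|C| / S, by positivity, fun ρ hρ => ⟨(hder ρ).differentiableAt, ?_⟩⟩
  rw [(hder ρ).deriv]
  have hCS : C ≤ ρ * S := by
    rcases hS0.eq_or_lt with h0 | h0
    · have e1 : g z + s = 0 := by
        have : ‖g z + s‖ ^ 2 = 0 := by nlinarith [sq_nonneg ‖g z + s‖, sq_nonneg ‖h z‖]
        simpa using this
      have e2 : h z = 0 := by
        have : ‖h z‖ ^ 2 = 0 := by nlinarith [sq_nonneg ‖g z + s‖, sq_nonneg ‖h z‖]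
        simpa using this
      rw [← h0, hC, e1, e2]
      simp
    · rw [div_le_iff₀ h0] at hρ
      exact (le_abs_self C).trans hρ
  have e3 : ⟪g z + s, dlam⟫ = ⟪g z + s, lamG⟫ - ⟪g z + s, lam⟫ := by
    rw [hdlam, inner_sub_right]
  have e4 : ⟪h z, dnu⟫ = ⟪h z, nuG⟫ - ⟪h z, nu⟫ := by
    rw [hdnu, inner_sub_right]
  have e5 : (1 / (2 * α)) * ‖dz‖ ^ 2 = (1 / α) * ‖dz‖ ^ 2 / 2 := by
    field_simp
  have e6 : 0 ≤ (1 / α) * ‖dz‖ ^ 2 := by positivity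
  linarith
end

section
/- (Lemma B.1(i), regularity part: LICQ is preserved by squared slacks.) Let b₁,…,b_m ∈ ℝⁿ and c₁,…,c_p ∈ ℝⁿ (playing the constraint gradients ∇g_j(z⋆) and ∇h_i(z⋆)), let g₁,…,g_m ≤ 0 be reals (the values g_j(z⋆)), and set y⋆_j := √(−2 g_j) ∈ ℝ. Let A := {j ∈ {1,…,m} : g_j = 0} be the active index set. In ℝⁿ × ℝᵐ consider the family of m + p vectors consisting of v_j := (b_j, y⋆_j e_j) for j = 1,…,m (where e_j is the j-th standard basis vector of ℝᵐ) together with w_i := (c_i, 0) for i = 1,…,p. Then this family is linearly independent if and only if the family {c_i : i = 1,…,p} ∪ {b_j : j ∈ A} is linearly independent in ℝⁿ. -/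
/-- Lemma B.1(i), regularity part: LICQ is preserved by squared slacks.
The family `(bⱼ, y⋆ⱼ eⱼ)_{j} ∪ (cᵢ, 0)_{i}` in `ℝⁿ × ℝᵐ`, with
`y⋆ⱼ = √(−2gⱼ)`, is linearly independent iff
`{cᵢ} ∪ {bⱼ : j active}` is linearly independent in `ℝⁿ`. -/
theorem stmt_10 {n m p : ℕ}
    (b : Fin m → EuclideanSpace ℝ (Fin n))
    (c : Fin p → EuclideanSpace ℝ (Fin n))
    (gval : Fin m → ℝ) (hgval : ∀ j, gval j ≤ 0)
    (ystar : Fin m → ℝ) (hystar : ∀ j, ystar j = Real.sqrt (-(2 * gval j))) :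
    LinearIndependent ℝ
        (Sum.elim
          (fun j : Fin m =>
            ((b j, EuclideanSpace.single j (ystar j)) :
              EuclideanSpace ℝ (Fin n) × EuclideanSpace ℝ (Fin m)))
          (fun i : Fin p =>
            ((c i, 0) : EuclideanSpace ℝ (Fin n) × EuclideanSpace ℝ (Fin m)))) ↔
      LinearIndependent ℝ
        (Sum.elim c (fun j : {j : Fin m // gval j = 0} => b j)) := by
  have hy : ∀ j, ystar j = 0 ↔ gval j = 0 := by
    intro j
    rw [hystar, Real.sqrt_eq_zero (by linarith [hgval j])]
    constructor <;> intro h <;> linarith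
  have key : ∀ u : Fin m → ℝ, (∀ j, gval j ≠ 0 → u j = 0) →
      ∑ j : {j : Fin m // gval j = 0}, u j • b j = ∑ j, u j • b j := by
    intro u hu
    rw [← Finset.sum_subtype (Finset.univ.filter fun j => gval j = 0) (by simp)
      (fun j => u j • b j)]
    apply Finset.sum_filter_of_ne
    intro j _ hne
    by_contra hg
    exact hne (by rw [hu j hg, zero_smul])
  have slack : ∀ u : Fin m → ℝ,
      (∑ j, u j • EuclideanSpace.single j (ystar j) : EuclideanSpace ℝ (Fin m)) = 0 ↔
        ∀ j, gval j ≠ 0 → u j = 0 := by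
    intro u
    have e : ∀ k, (∑ j, u j • EuclideanSpace.single j (ystar j) : EuclideanSpace ℝ (Fin m)) k
        = u k * ystar k := by
      intro k
      simp [Pi.single_apply]
    constructor
    · intro h j hj
      have := e j
      rw [h] at this
      have h2 : u j * ystar j = 0 := by simpa using this.symm
      exact (mul_eq_zero.mp h2).resolve_right (fun h3 => hj ((hy j).1 h3))
    · intro h
      ext k
      rw [e k]
      by_cases hk : gval k = 0
      · simp [(hy k).2 hk]
      · simp [h k hk]
  rw [Fintype.linearIndependent_iff, Fintype.linearIndependent_iff]
  simp only [Fintype.sum_sum_type, Sum.elim_inl, Sum.elim_inr, Prod.ext_iff, Prod.fst_add,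
    Prod.snd_add, Prod.fst_sum, Prod.snd_sum, Prod.smul_fst, Prod.smul_snd, smul_zero,
    Finset.sum_const_zero, add_zero, Prod.fst_zero, Prod.snd_zero, slack]
  constructor
  · intro H f hf
    classical
    let u : Fin m → ℝ := fun j => if h : gval j = 0 then f (Sum.inr ⟨j, h⟩) else 0
    have hu : ∀ j, gval j ≠ 0 → u j = 0 := fun j hj => by simp [u, hj]
    have hu' : ∀ j : {j : Fin m // gval j = 0}, u j = f (Sum.inr j) := fun j => by
      simp [u, j.2]
    have := H (Sum.elim u (fun i => f (Sum.inl i))) ⟨by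
      simp only [Sum.elim_inl, Sum.elim_inr]
      rw [← key u hu, add_comm]
      simpa only [hu'] using hf, hu⟩
    rintro (i | j)
    · exact this (Sum.inr i)
    · rw [← hu' j]
      exact this (Sum.inl j)
  · rintro H F ⟨h1, h2⟩
    have := H (Sum.elim (fun i => F (Sum.inr i)) (fun j => F (Sum.inl j))) (by
      simp only [Sum.elim_inl, Sum.elim_inr]
      rw [key (fun j => F (Sum.inl j)) h2, add_comm]
      exact h1)
    rintro (j | i)
    · by_cases hj : gval j = 0
      · exact this (Sum.inr ⟨j, hj⟩)
      · exact h2 j hj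
    · exact this (Sum.inl i)
end

section
/- (Closed-form inverse of the structured MPC projection matrix, Section 5.2.) Let M ∈ ℕ, y_a, y_b, q ∈ ℝ^M and y_c ∈ ℝ. For j = 1,…,M set δ_j := y_{a,j}² + y_{b,j}² + y_{a,j}² y_{b,j}² and assume δ_j > 0 for every j. Let D := diag(1/δ_j), A := diag(y_{a,j}²/δ_j), B := diag(y_{b,j}²/δ_j) (M×M diagonal matrices), assume σ := Σ_{j=1}^M (y_{a,j}² y_{b,j}²/δ_j) q_j² + y_c² > 0, and set r := 1/σ. Then the (2M+1)×(2M+1) block matrix G := [[I + diag(y_a)², −I, −q], [−I, I + diag(y_b)², q], [−qᵀ, qᵀ, qᵀq + y_c²]] is invertible, with inverse G⁻¹ = [[D + B + r(Bq)(Bq)ᵀ, D − r(Bq)(Aq)ᵀ, r·Bq], [D − r(Aq)(Bq)ᵀ, D + A + r(Aq)(Aq)ᵀ, −r·Aq], [r(Bq)ᵀ, −r(Aq)ᵀ, r]]. -/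
open Matrix

/-- Closed-form inverse of the structured MPC projection matrix (Section 5.2).
With `δⱼ = y_{a,j}² + y_{b,j}² + y_{a,j}²y_{b,j}² > 0`, `D = diag(1/δⱼ)`,
`A = diag(y_{a,j}²/δⱼ)`, `B = diag(y_{b,j}²/δⱼ)`,
`σ = Σⱼ (y_{a,j}²y_{b,j}²/δⱼ) qⱼ² + y_c² > 0` and `r = 1/σ`, the block matrix
`G = [[I + diag(y_a)², −I, −q], [−I, I + diag(y_b)², q], [−qᵀ, qᵀ, qᵀq + y_c²]]`
is invertible with the displayed inverse. -/
theorem stmt_16 {M : ℕ} (ya yb q : Fin M → ℝ) (yc : ℝ)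
    (δ : Fin M → ℝ) (hδdef : ∀ j, δ j = (ya j) ^ 2 + (yb j) ^ 2 + (ya j) ^ 2 * (yb j) ^ 2)
    (hδpos : ∀ j, 0 < δ j)
    (D A B : Matrix (Fin M) (Fin M) ℝ)
    (hD : D = Matrix.diagonal fun j => 1 / δ j)
    (hA : A = Matrix.diagonal fun j => (ya j) ^ 2 / δ j)
    (hB : B = Matrix.diagonal fun j => (yb j) ^ 2 / δ j)
    (Aq Bq : Fin M → ℝ)
    (hAq : Aq = fun j => (ya j) ^ 2 / δ j * q j)
    (hBq : Bq = fun j => (yb j) ^ 2 / δ j * q j)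
    (σ : ℝ) (hσdef : σ = (∑ j, (ya j) ^ 2 * (yb j) ^ 2 / δ j * (q j) ^ 2) + yc ^ 2)
    (hσpos : 0 < σ)
    (r : ℝ) (hr : r = 1 / σ)
    (G Ginv : Matrix ((Fin M ⊕ Fin M) ⊕ Unit) ((Fin M ⊕ Fin M) ⊕ Unit) ℝ)
    (hG : G =
      Matrix.fromBlocks
        (Matrix.fromBlocks
          (1 + Matrix.diagonal fun j => (ya j) ^ 2) (-1)
          (-1) (1 + Matrix.diagonal fun j => (yb j) ^ 2))
        (Matrix.of fun i (_ : Unit) => Sum.elim (fun j => -q j) (fun j => q j) i)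
        (Matrix.of fun (_ : Unit) i => Sum.elim (fun j => -q j) (fun j => q j) i)
        (Matrix.of fun (_ : Unit) (_ : Unit) => (∑ j, (q j) ^ 2) + yc ^ 2))
    (hGinv : Ginv =
      Matrix.fromBlocks
        (Matrix.fromBlocks
          (D + B + r • Matrix.vecMulVec Bq Bq) (D - r • Matrix.vecMulVec Bq Aq)
          (D - r • Matrix.vecMulVec Aq Bq) (D + A + r • Matrix.vecMulVec Aq Aq))
        (Matrix.of fun i (_ : Unit) => Sum.elim (fun j => r * Bq j) (fun j => -(r * Aq j)) i)
        (Matrix.of fun (_ : Unit) i => Sum.elim (fun j => r * Bq j) (fun j => -(r * Aq j)) i)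
        (Matrix.of fun (_ : Unit) (_ : Unit) => r)) :
    IsUnit G ∧ G⁻¹ = Ginv := by
  have hS : (∑ j, q j * (Aq j + Bq j)) = ((∑ j, (q j) ^ 2) + yc ^ 2) - σ := by
    rw [hσdef, add_sub_add_right_eq_sub, ← Finset.sum_sub_distrib]
    refine Finset.sum_congr rfl fun j _ => ?_
    have h := (hδpos j).ne'
    rw [hAq, hBq]
    field_simp
    rw [hδdef j]
    ring
  have hrσ : r * σ = 1 := by
    rw [hr]
    field_simp
  have e1 : ∀ j, (1 + ya j ^ 2) * Bq j - q j + Aq j = 0 := by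
    intro j
    have h := (hδpos j).ne'
    rw [hAq, hBq]
    field_simp
    rw [hδdef j]
    ring
  have e2 : ∀ j, (1 + yb j ^ 2) * Aq j - q j + Bq j = 0 := by
    intro j
    have h := (hδpos j).ne'
    rw [hAq, hBq]
    field_simp
    rw [hδdef j]
    ring
  have d1 : ∀ j, (1 + ya j ^ 2) * (1 / δ j + yb j ^ 2 / δ j) - 1 / δ j = 1 := by
    intro j
    have h := (hδpos j).ne'
    field_simp
    rw [hδdef j]
    ring
  have d2 : ∀ j, (1 + yb j ^ 2) * (1 / δ j + ya j ^ 2 / δ j) - 1 / δ j = 1 := by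
    intro j
    have h := (hδpos j).ne'
    field_simp
    rw [hδdef j]
    ring
  have d3 : ∀ j, (1 + ya j ^ 2) * (1 / δ j) - (1 / δ j + ya j ^ 2 / δ j) = 0 := by
    intro j
    ring
  have d4 : ∀ j, (1 + yb j ^ 2) * (1 / δ j) - (1 / δ j + yb j ^ 2 / δ j) = 0 := by
    intro j
    ring
  have hBq' : ∀ j, Bq j = yb j ^ 2 / δ j * q j := fun j => by rw [hBq]
  have hAq' : ∀ j, Aq j = ya j ^ 2 / δ j * q j := fun j => by rw [hAq]
  have hone : ∀ d : Fin M → ℝ, (1 + Matrix.diagonal d : Matrix (Fin M) (Fin M) ℝ)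
      = Matrix.diagonal fun j => 1 + d j := by
    intro d
    rw [← Matrix.diagonal_one, Matrix.diagonal_add]
  have key : G * Ginv = 1 := by
    rw [hone, hone] at hG
    rw [hG, hGinv, hD, hA, hB, Matrix.fromBlocks_multiply, Matrix.fromBlocks_multiply]
    clear hG hGinv hAq hBq
    have hS' := hS
    simp only [mul_add, Finset.sum_add_distrib] at hS'
    ext i j
    rcases i with (i | i) | i <;> rcases j with (j | j) | j
    · have := d1 i
      by_cases hij : i = j
      · subst hij
        simp [Matrix.mul_apply, Matrix.diagonal_apply, Matrix.vecMulVec_apply]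
        linear_combination d1 i + r * Bq i * e1 i
      · simp [Matrix.mul_apply, Matrix.diagonal_apply, Matrix.vecMulVec_apply, hij]
        linear_combination r * Bq j * e1 i
    · by_cases hij : i = j
      · subst hij
        simp [Matrix.mul_apply, Matrix.diagonal_apply, Matrix.vecMulVec_apply]
        linear_combination d3 i - r * Aq i * e1 i
      · simp [Matrix.mul_apply, Matrix.diagonal_apply, Matrix.vecMulVec_apply, hij]
        linear_combination - r * Aq j * e1 i
    · simp [Matrix.mul_apply, Matrix.diagonal_apply, Matrix.one_apply]
      linear_combination r * e1 i
    · by_cases hij : i = j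
      · subst hij
        simp [Matrix.mul_apply, Matrix.diagonal_apply, Matrix.vecMulVec_apply]
        linear_combination d4 i - r * Bq i * e2 i
      · simp [Matrix.mul_apply, Matrix.diagonal_apply, Matrix.vecMulVec_apply, hij]
        linear_combination - r * Bq j * e2 i
    · by_cases hij : i = j
      · subst hij
        simp [Matrix.mul_apply, Matrix.diagonal_apply, Matrix.vecMulVec_apply]
        linear_combination d2 i + r * Aq i * e2 i
      · simp [Matrix.mul_apply, Matrix.diagonal_apply, Matrix.vecMulVec_apply, hij]
        linear_combination r * Aq j * e2 i
    · simp [Matrix.mul_apply, Matrix.diagonal_apply, Matrix.one_apply]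
      linear_combination - r * e2 i
    · have h1 : ∑ k, q k * (r * (Aq k * Bq j)) = r * Bq j * ∑ k, q k * Aq k := by
        rw [Finset.mul_sum]
        exact Finset.sum_congr rfl fun k _ => by ring
      have h2 : ∑ k, q k * (r * (Bq k * Bq j)) = r * Bq j * ∑ k, q k * Bq k := by
        rw [Finset.mul_sum]
        exact Finset.sum_congr rfl fun k _ => by ring
      simp [Matrix.mul_apply, Matrix.diagonal_apply, Matrix.vecMulVec_apply, mul_add, mul_sub,
        Finset.sum_add_distrib, Finset.sum_sub_distrib, h1, h2]
      linear_combination hBq' j - r * Bq j * hS' + Bq j * hrσ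
    · have h1 : ∑ k, q k * (r * (Aq k * Aq j)) = r * Aq j * ∑ k, q k * Aq k := by
        rw [Finset.mul_sum]
        exact Finset.sum_congr rfl fun k _ => by ring
      have h2 : ∑ k, q k * (r * (Bq k * Aq j)) = r * Aq j * ∑ k, q k * Bq k := by
        rw [Finset.mul_sum]
        exact Finset.sum_congr rfl fun k _ => by ring
      simp [Matrix.mul_apply, Matrix.diagonal_apply, Matrix.vecMulVec_apply, mul_add, mul_sub,
        Finset.sum_add_distrib, Finset.sum_sub_distrib, h1, h2]
      linear_combination - hAq' j + r * Aq j * hS' - Aq j * hrσ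
    · have h1 : ∑ k, q k * (r * Aq k) = r * ∑ k, q k * Aq k := by
        rw [Finset.mul_sum]
        exact Finset.sum_congr rfl fun k _ => by ring
      have h2 : ∑ k, q k * (r * Bq k) = r * ∑ k, q k * Bq k := by
        rw [Finset.mul_sum]
        exact Finset.sum_congr rfl fun k _ => by ring
      simp [Matrix.mul_apply, h1, h2]
      linear_combination hrσ - r * hS'
  exact ⟨IsUnit.of_mul_eq_one _ key, Matrix.inv_eq_right_inv key⟩
end
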